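/- Under Assumption 1, let the disturbance set satisfy D ⊆ ∪_{i=1}^{n_D} D_i with each D_i = {d : d̲^i ≤ d ≤ d̄^i}, d̲^i ≥ 0, and let {I_q}_{q∈Q} be a box partition of X with projection π : X → Q defined by x ∈ I_{π(x)}. Define transitions of the CM-induced finite state abstraction by: (q, s, q') is a transition iff I_{q'} ∩ P̄ost(cl(I_q), s) ≠ ∅, where P̄ost(cl(I_q), s) = ∪_{i=1}^{n_D} { x' : F_l(ξ̲^l, s, d̲^i) ≤ x'_l ≤ F_l(ξ̄^l, s, d̄^i) for all l } with ξ̲^l, ξ̄^l built from the corners x̲_q, x̄_q of cl(I_q) by ξ̲^l_k = x̲_{q,k}, ξ̄^l_k = x̄_{q,k} for k ∈ L^down_l ∪ L^up_l and ξ̲^l_k = x̄_{q,k}, ξ̄^l_k = x̲_{q,k} for k ∈ L^adj_l. Then the abstraction simulates the traffic dynamics: for every x ∈ X, every signal input s, and every d ∈ D, letting x' = F(x, s, d), the triple (π(x), s, π(x')) is a transition of the abstraction. -/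

import Mathlib

open Finset
open scoped Classical

/-- Outflow `f^out_l(x, s)` of link `l` under signal `s`. -/
noncomputable def fout {L : Type*} [Fintype L]
    (c xcap : L → ℝ) (β α : L → L → ℝ) (s : Finset L)
    (x : L → ℝ) (l : L) : ℝ :=
  if l ∈ s then
    (Finset.univ.filter fun k => 0 < β l k).fold min (min (x l) (c l))
      fun k => α l k / β l k * (xcap k - x k)
  else 0

/-- Queue update `F_l(x, s, d)`, with `L^up_l = {j : η j = τ l}`. -/
noncomputable def Fupd {L V : Type*} [Fintype L]
    (η : L → V) (τ : L → Option V)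
    (c xcap : L → ℝ) (β α : L → L → ℝ) (s : Finset L)
    (x d : L → ℝ) (l : L) : ℝ :=
  min (xcap l)
    (x l - fout c xcap β α s x l
      + ∑ j ∈ Finset.univ.filter (fun j => τ l = some (η j)), β j l * fout c xcap β α s x j
      + d l)

/-!
Write `x l = min (x l) (c l) + max (x l) (c l) - c l`. Before truncation at the capacity,
`F_l(x, s, d)` is then, up to the constant `-c l`, the sum of
* the unserved demand `min (x l) (c l) - fout x l`,
* the inflow plus `A * max (x l) (c l)`, where `A ≤ 1` is the sum of the supply ratios of the
  actuated links entering `l`,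
* `(1 - A) * max (x l) (c l)`,
* the exogenous arrival `d l`.

Each summand is nonincreasing in the queues adjacent to `l` and nondecreasing in all other
variables. For the inflow this is Assumption 1: the supply of `l` cannot bind while `x l ≤ c l`,
so raising `x l` lowers the inflow from an upstream link `j` by at most `α j l` times the increase
of `max (x l) (c l)`. Hence the values of `F_l` at the two mixed corners of a box bound `F_l` on the
whole box.
-/

theorem sum_le_one_of_nonempty_imp_eq_one {ι R : Type*} [AddCommMonoidWithOne R]
    [Preorder R] [ZeroLEOneClass R] {S : Finset ι} {f : ι → R} (h : S.Nonempty → ∑ i ∈ S, f i = 1) :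
    ∑ i ∈ S, f i ≤ 1 := by
  rcases S.eq_empty_or_nonempty with rfl | hS
  · simp
  · exact (h hS).le

section MixedOrder

variable {L W R : Type*}

/-- The order on queue vectors for which `F_l` is monotone: `x k ≤ y k` for every link `k`, except
that the inequality is reversed on `L^adj_l`, the links other than `l` with the same upstream
intersection. -/
structure MixedLE [LE R] (τ : L → W) (l : L) (x y : L → R) : Prop where
  ge_of_adj : ∀ k, k ≠ l ∧ τ k = τ l → y k ≤ x k
  le_of_not_adj : ∀ k, ¬(k ≠ l ∧ τ k = τ l) → x k ≤ y k

theorem MixedLE.le_self [LE R] {τ : L → W} {l : L} {x y : L → R} (h : MixedLE τ l x y) :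
    x l ≤ y l :=
  h.le_of_not_adj l fun hl => hl.1 rfl

section Neighbours

variable {V : Type*} [LE R] {η : L → V} {τ : L → Option V} {l j k : L} {x y : L → R}

theorem MixedLE.le_of_downstream (hself : ∀ l, some (η l) ≠ τ l) (h : MixedLE τ l x y)
    (hk : τ k = some (η l)) : x k ≤ y k :=
  h.le_of_not_adj k fun hadj => hself l (hk.symm.trans hadj.2)

theorem MixedLE.le_of_upstream (hself : ∀ l, some (η l) ≠ τ l) (h : MixedLE τ l x y)
    (hj : some (η j) = τ l) : x j ≤ y j :=
  h.le_of_not_adj j fun hadj => hself j (hj.trans hadj.2.symm)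

end Neighbours

/-- The mixed corner equal to `b` on `L^adj_l` and to `a` elsewhere. For the box `[a, b]`, the
corner `ξ̲^l` of the paper is `mixedCorner τ l a b` and `ξ̄^l` is `mixedCorner τ l b a`. -/
def mixedCorner [DecidableEq L] [DecidableEq W] (τ : L → W) (l : L) (a b : L → R) : L → R :=
  fun k => if k ≠ l ∧ τ k = τ l then b k else a k

variable [Preorder R] [DecidableEq L] [DecidableEq W] {τ : L → W} {x a b : L → R}

theorem mixedCorner_mixedLE (l : L) (hx : x ∈ Set.Icc a b) :
    MixedLE τ l (mixedCorner τ l a b) x where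
  ge_of_adj k hk := by simpa only [mixedCorner, if_pos hk] using hx.2 k
  le_of_not_adj k hk := by simpa only [mixedCorner, if_neg hk] using hx.1 k

theorem mixedLE_mixedCorner (l : L) (hx : x ∈ Set.Icc a b) :
    MixedLE τ l x (mixedCorner τ l b a) where
  ge_of_adj k hk := by simpa only [mixedCorner, if_pos hk] using hx.1 k
  le_of_not_adj k hk := by simpa only [mixedCorner, if_neg hk] using hx.2 k

end MixedOrder

theorem saturation_le_supply {L : Type*} {c xcap : L → ℝ} {β α : L → L → ℝ} {j l : L}
    (hα : 0 < α j l) (hβ : 0 < β j l) (hA1 : c l ≤ xcap l - β j l / α j l * c j) :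
    c j ≤ α j l / β j l * (xcap l - c l) :=
  calc c j = α j l / β j l * (β j l / α j l * c j) := by field_simp
    _ ≤ α j l / β j l * (xcap l - c l) := by gcongr; linarith

section Outflow

variable {L : Type*} [Fintype L] {c xcap : L → ℝ} {β α : L → L → ℝ} {s : Finset L}
  {x y : L → ℝ} {j l : L} {a : ℝ}

theorem fout_of_notMem (hl : l ∉ s) : fout c xcap β α s x l = 0 :=
  if_neg hl

theorem le_fout_iff (hl : l ∈ s) :
    a ≤ fout c xcap β α s x l ↔
      a ≤ x l ∧ a ≤ c l ∧ ∀ k, 0 < β l k → a ≤ α l k / β l k * (xcap k - x k) := by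
  simp [fout, hl, Finset.le_fold_min, and_assoc]

theorem fout_le_min (hl : l ∈ s) : fout c xcap β α s x l ≤ min (x l) (c l) :=
  have h := (le_fout_iff hl).1 le_rfl
  le_min h.1 h.2.1

theorem fout_le_supply (hj : j ∈ s) (hβ : 0 < β j l) :
    fout c xcap β α s x j ≤ α j l / β j l * (xcap l - x l) :=
  ((le_fout_iff hj).1 le_rfl).2.2 l hβ

theorem fout_nonneg (hc : 0 ≤ c l) (hα : ∀ k, 0 ≤ α l k) (hx : x ∈ Set.Icc 0 xcap) :
    0 ≤ fout c xcap β α s x l := by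
  by_cases hl : l ∈ s
  · exact (le_fout_iff hl).2 ⟨hx.1 l, hc, fun k hk =>
      mul_nonneg (div_nonneg (hα k) hk.le) (sub_nonneg.2 (hx.2 k))⟩
  · exact (fout_of_notMem hl).ge

theorem fout_le_queue (hx : 0 ≤ x l) : fout c xcap β α s x l ≤ x l := by
  by_cases hl : l ∈ s
  · exact (fout_le_min hl).trans (min_le_left _ _)
  · rwa [fout_of_notMem hl]

theorem unservedDemand_le_unservedDemand (hα : ∀ k, 0 ≤ α l k) (hl : x l ≤ y l)
    (hdown : ∀ k, 0 < β l k → x k ≤ y k) :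
    min (x l) (c l) - fout c xcap β α s x l ≤ min (y l) (c l) - fout c xcap β α s y l := by
  have hmin : min (x l) (c l) ≤ min (y l) (c l) := min_le_min_right _ hl
  by_cases hls : l ∈ s
  · have hdemand : fout c xcap β α s y l ≤ min (y l) (c l) := fout_le_min hls
    suffices fout c xcap β α s y l - (min (y l) (c l) - min (x l) (c l)) ≤
        fout c xcap β α s x l by linarith
    refine (le_fout_iff hls).2 ⟨?_, ?_, fun k hk => ?_⟩
    · linarith [min_le_left (x l) (c l)]
    · linarith [min_le_right (x l) (c l)]
    · have hratio : 0 ≤ α l k / β l k := div_nonneg (hα k) hk.le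
      calc fout c xcap β α s y l - (min (y l) (c l) - min (x l) (c l))
          ≤ fout c xcap β α s y l := sub_le_self _ (sub_nonneg.2 hmin)
        _ ≤ α l k / β l k * (xcap k - y k) := fout_le_supply hls hk
        _ ≤ α l k / β l k * (xcap k - x k) := by gcongr; exact hdown k hk
  · simpa only [fout_of_notMem hls, sub_zero] using hmin

theorem fout_le_supply_max (hj : j ∈ s) (hα : 0 < α j l) (hβ : 0 < β j l)
    (hA1 : c l ≤ xcap l - β j l / α j l * c j) :
    fout c xcap β α s x j ≤ α j l / β j l * (xcap l - max (x l) (c l)) := by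
  rcases max_choice (x l) (c l) with h | h <;> rw [h]
  · exact fout_le_supply hj hβ
  · exact ((fout_le_min hj).trans (min_le_right _ _)).trans (saturation_le_supply hα hβ hA1)

theorem fout_add_mul_max_le (hj : j ∈ s) (hα : ∀ k, 0 < α j k) (hβ : 0 < β j l)
    (hA1 : c l ≤ xcap l - β j l / α j l * c j) (hxyj : x j ≤ y j) (hxyl : x l ≤ y l)
    (hyx : ∀ k, k ≠ l → 0 < β j k → y k ≤ x k) :
    fout c xcap β α s x j + α j l / β j l * max (x l) (c l) ≤
      fout c xcap β α s y j + α j l / β j l * max (y l) (c l) := by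
  have hratio : ∀ k, 0 < β j k → 0 ≤ α j k / β j k := fun k hk => (div_pos (hα k) hk).le
  have hmax : α j l / β j l * max (x l) (c l) ≤ α j l / β j l * max (y l) (c l) :=
    mul_le_mul_of_nonneg_left (max_le_max_right _ hxyl) (hratio l hβ)
  set loss := α j l / β j l * max (y l) (c l) - α j l / β j l * max (x l) (c l) with hloss
  have hloss_nonneg : 0 ≤ loss := sub_nonneg.2 hmax
  have hdemand : fout c xcap β α s x j ≤ min (x j) (c j) := fout_le_min hj
  suffices fout c xcap β α s x j - loss ≤ fout c xcap β α s y j by linarith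
  refine (le_fout_iff hj).2 ⟨?_, ?_, fun k hk => ?_⟩
  · linarith [min_le_left (x j) (c j)]
  · linarith [min_le_right (x j) (c j)]
  · rcases eq_or_ne k l with rfl | hkl
    · calc fout c xcap β α s x j - loss
          ≤ α j k / β j k * (xcap k - max (x k) (c k)) - loss :=
            sub_le_sub_right (fout_le_supply_max hj (hα k) hβ hA1) _
        _ = α j k / β j k * (xcap k - max (y k) (c k)) := by rw [hloss]; ring
        _ ≤ α j k / β j k * (xcap k - y k) :=
            mul_le_mul_of_nonneg_left (sub_le_sub_left (le_max_left _ _) _) (hratio k hk)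
    · calc fout c xcap β α s x j - loss
          ≤ fout c xcap β α s x j := sub_le_self _ hloss_nonneg
        _ ≤ α j k / β j k * (xcap k - x k) := fout_le_supply hj hk
        _ ≤ α j k / β j k * (xcap k - y k) :=
            mul_le_mul_of_nonneg_left (sub_le_sub_left (hyx k hkl hk) _) (hratio k hk)

theorem mul_fout_add_mul_max_le (hj : j ∈ s) (hα : ∀ k, 0 < α j k) (hβ : 0 ≤ β j l)
    (hA1 : 0 < β j l → c l ≤ xcap l - β j l / α j l * c j) (hxyj : x j ≤ y j)
    (hxyl : x l ≤ y l) (hyx : ∀ k, k ≠ l → 0 < β j k → y k ≤ x k) :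
    β j l * fout c xcap β α s x j + α j l * max (x l) (c l) ≤
      β j l * fout c xcap β α s y j + α j l * max (y l) (c l) := by
  rcases hβ.eq_or_lt with h0 | hpos
  · simpa only [← h0, zero_mul, zero_add] using
      mul_le_mul_of_nonneg_left (max_le_max_right (c l) hxyl) (hα l).le
  · have hscale : ∀ f m : ℝ, β j l * f + α j l * m = β j l * (f + α j l / β j l * m) := by
      intro f m
      field_simp
    rw [hscale, hscale]
    exact mul_le_mul_of_nonneg_left
      (fout_add_mul_max_le hj hα hpos (hA1 hpos) hxyj hxyl hyx) hβ

end Outflow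

section Network

variable {L V : Type*} [Fintype L] {η : L → V} {τ : L → Option V} {c xcap : L → ℝ}
  {β α : L → L → ℝ} {s : Finset L} {x y d e : L → ℝ} {l : L}

theorem inflow_eq_sum_actuated :
    ∑ j with τ l = some (η j), β j l * fout c xcap β α s x j =
      ∑ j with j ∈ s ∧ some (η j) = τ l, β j l * fout c xcap β α s x j := by
  refine (Finset.sum_subset (fun j hj => ?_) fun j hj hjs => ?_).symm
  · simp only [Finset.mem_filter_univ] at hj ⊢
    exact hj.2.symm
  · simp only [Finset.mem_filter_univ] at hj hjs
    rw [fout_of_notMem fun h => hjs ⟨h, hj.symm⟩, mul_zero]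

theorem inflow_add_mul_max_le (hself : ∀ l, some (η l) ≠ τ l) (hβ : ∀ l k, 0 ≤ β l k)
    (hβsupp : ∀ l k, 0 < β l k → τ k = some (η l)) (hα : ∀ l k, 0 < α l k)
    (hA1 : ∀ j, 0 < β j l → c l ≤ xcap l - β j l / α j l * c j) (hxy : MixedLE τ l x y) :
    ∑ j with τ l = some (η j), β j l * fout c xcap β α s x j +
        (∑ j with j ∈ s ∧ some (η j) = τ l, α j l) * max (x l) (c l) ≤
      ∑ j with τ l = some (η j), β j l * fout c xcap β α s y j +
        (∑ j with j ∈ s ∧ some (η j) = τ l, α j l) * max (y l) (c l) := by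
  simp only [inflow_eq_sum_actuated, Finset.sum_mul, ← Finset.sum_add_distrib]
  refine Finset.sum_le_sum fun j hj => ?_
  obtain ⟨hjs, hup⟩ := (Finset.mem_filter_univ j).1 hj
  exact mul_fout_add_mul_max_le hjs (hα j) (hβ j l) (hA1 j) (hxy.le_of_upstream hself hup)
    hxy.le_self fun k hkl hk => hxy.ge_of_adj k ⟨hkl, (hβsupp j k hk).trans hup⟩

theorem fupd_le_fupd_of_mixedLE (hself : ∀ l, some (η l) ≠ τ l) (hβ : ∀ l k, 0 ≤ β l k)
    (hβsupp : ∀ l k, 0 < β l k → τ k = some (η l)) (hα : ∀ l k, 0 < α l k)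
    (hαsum : ∑ j with j ∈ s ∧ some (η j) = τ l, α j l ≤ 1)
    (hA1 : ∀ j, 0 < β j l → c l ≤ xcap l - β j l / α j l * c j)
    (hxy : MixedLE τ l x y) (hde : d l ≤ e l) :
    Fupd η τ c xcap β α s x d l ≤ Fupd η τ c xcap β α s y e l := by
  have hunserved := unservedDemand_le_unservedDemand (c := c) (xcap := xcap) (β := β) (s := s)
    (fun k => (hα l k).le) hxy.le_self
    fun k hk => hxy.le_of_downstream hself (hβsupp l k hk)
  have hinflow := inflow_add_mul_max_le (s := s) hself hβ hβsupp hα hA1 hxy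
  have hmax : (1 - ∑ j with j ∈ s ∧ some (η j) = τ l, α j l) * max (x l) (c l) ≤
      (1 - ∑ j with j ∈ s ∧ some (η j) = τ l, α j l) * max (y l) (c l) :=
    mul_le_mul_of_nonneg_left (max_le_max_right _ hxy.le_self) (sub_nonneg.2 hαsum)
  have hsplitx := min_add_max (x l) (c l)
  have hsplity := min_add_max (y l) (c l)
  refine min_le_min_left _ ?_
  linarith

theorem fupd_mem_Icc (hc : ∀ l, 0 ≤ c l) (hβ : ∀ l k, 0 ≤ β l k) (hα : ∀ l k, 0 ≤ α l k)
    (hx : x ∈ Set.Icc 0 xcap) (hd : 0 ≤ d) :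
    Fupd η τ c xcap β α s x d ∈ Set.Icc 0 xcap := by
  refine ⟨fun l => le_min ((hx.1.trans hx.2) l) ?_, fun l => min_le_left _ _⟩
  have hout : 0 ≤ x l - fout c xcap β α s x l := sub_nonneg.2 (fout_le_queue (hx.1 l))
  have hin : 0 ≤ ∑ j with τ l = some (η j), β j l * fout c xcap β α s x j :=
    Finset.sum_nonneg fun j _ => mul_nonneg (hβ j l) (fout_nonneg (hc j) (hα j) hx)
  exact add_nonneg (add_nonneg hout hin) (hd l)

/-- The over-approximation `P̄ost([a, b], s)`, given by componentwise monotonicity (CM), of the set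
of successors of the box `[a, b]` for disturbances in the union of the boxes `[dlo i, dhi i]`. -/
def cmPost {ι : Type*} (η : L → V) (τ : L → Option V) (c xcap : L → ℝ) (β α : L → L → ℝ)
    (s : Finset L) (a b : L → ℝ) (dlo dhi : ι → L → ℝ) : Set (L → ℝ) :=
  ⋃ i, {x' | ∀ l,
    Fupd η τ c xcap β α s (mixedCorner τ l a b) (dlo i) l ≤ x' l ∧
      x' l ≤ Fupd η τ c xcap β α s (mixedCorner τ l b a) (dhi i) l}

theorem fupd_mem_cmPost (hself : ∀ l, some (η l) ≠ τ l) (hβ : ∀ l k, 0 ≤ β l k)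
    (hβsupp : ∀ l k, 0 < β l k → τ k = some (η l)) (hα : ∀ l k, 0 < α l k)
    (hαsum : ∀ k, ∑ j with j ∈ s ∧ some (η j) = τ k, α j k ≤ 1)
    (hA1 : ∀ l j, 0 < β j l → c l ≤ xcap l - β j l / α j l * c j)
    {a b : L → ℝ} (hx : x ∈ Set.Icc a b) {ι : Type*} {dlo dhi : ι → L → ℝ} {i : ι}
    (hd : d ∈ Set.Icc (dlo i) (dhi i)) :
    Fupd η τ c xcap β α s x d ∈ cmPost η τ c xcap β α s a b dlo dhi :=
  Set.mem_iUnion.2 ⟨i, fun l =>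
    ⟨fupd_le_fupd_of_mixedLE hself hβ hβsupp hα (hαsum l) (hA1 l)
        (mixedCorner_mixedLE l hx) (hd.1 l),
      fupd_le_fupd_of_mixedLE hself hβ hβsupp hα (hαsum l) (hA1 l)
        (mixedLE_mixedCorner l hx) (hd.2 l)⟩⟩

end Network

theorem cm_abstraction_simulates_general {L V : Type*} [Fintype L]
    (η : L → V) (τ : L → Option V) (hself : ∀ l, some (η l) ≠ τ l)
    (c xcap : L → ℝ) (hc : ∀ l, 0 ≤ c l)
    (β : L → L → ℝ) (hβ : ∀ l k, 0 ≤ β l k)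
    (hβsupp : ∀ l k, 0 < β l k → τ k = some (η l))
    (s : Finset L) (α : L → L → ℝ) (hα : ∀ l k, 0 < α l k)
    (hαsum : ∀ k, ∑ j with j ∈ s ∧ some (η j) = τ k, α j k ≤ 1)
    (hA1 : ∀ l k, 0 < β k l → c l ≤ xcap l - β k l / α k l * c k)
    {Q : Type*} (I : Q → Set (L → ℝ)) (lo hi : Q → L → ℝ)
    (hsub : ∀ q, I q ⊆ Set.Icc (lo q) (hi q))
    (π : (L → ℝ) → Q) (hπ : ∀ x ∈ Set.Icc (0 : L → ℝ) xcap, x ∈ I (π x))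
    {ι : Type*} (dlo dhi : ι → L → ℝ) (hdlo : ∀ i l, 0 ≤ dlo i l)
    (D : Set (L → ℝ)) (hD : D ⊆ ⋃ i, Set.Icc (dlo i) (dhi i)) :
    ∀ x ∈ Set.Icc (0 : L → ℝ) xcap, ∀ d ∈ D,
      (I (π (Fupd η τ c xcap β α s x d)) ∩
        cmPost η τ c xcap β α s (lo (π x)) (hi (π x)) dlo dhi).Nonempty := by
  intro x hx d hd
  obtain ⟨i, hdi⟩ := Set.mem_iUnion.1 (hD hd)
  have hd_nonneg : 0 ≤ d := le_trans (hdlo i) hdi.1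
  have hstate : Fupd η τ c xcap β α s x d ∈ Set.Icc 0 xcap :=
    fupd_mem_Icc hc hβ (fun l k => (hα l k).le) hx hd_nonneg
  exact ⟨_, hπ _ hstate,
    fupd_mem_cmPost hself hβ hβsupp hα hαsum hA1 (hsub _ (hπ x hx)) hdi⟩

/-- Under Assumption 1, the CM-induced finite state abstraction
simulates the traffic dynamics: for every `x ∈ X`, signal `s` and disturbance `d ∈ D`,
letting `x' = F(x, s, d)`, the triple `(π x, s, π x')` is a transition of the
abstraction, i.e. `I (π x') ∩ P̄ost(cl(I (π x)), s) ≠ ∅`. -/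
theorem cm_abstraction_simulates {L V : Type*} [Fintype L]
    (η : L → V) (τ : L → Option V) (hself : ∀ l, some (η l) ≠ τ l)
    (c xcap : L → ℝ) (hc : ∀ l, 0 < c l) (hcap : ∀ l, 0 < xcap l)
    (β : L → L → ℝ) (hβ : ∀ l k, 0 ≤ β l k)
    (hβsupp : ∀ l k, 0 < β l k → τ k = some (η l))
    (hβsum : ∀ l, ∑ k ∈ Finset.univ.filter (fun k => τ k = some (η l)), β l k ≤ 1)
    (s : Finset L) (α : L → L → ℝ) (hα : ∀ l k, 0 < α l k)
    (hαsum : ∀ k, (Finset.univ.filter fun j => j ∈ s ∧ some (η j) = τ k).Nonempty →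
      ∑ j ∈ Finset.univ.filter (fun j => j ∈ s ∧ some (η j) = τ k), α j k = 1)
    (hA1 : ∀ l k, τ l = some (η k) → 0 < β k l → c l ≤ xcap l - β k l / α k l * c k)
    (Q : Type*) [Fintype Q] (I : Q → Set (L → ℝ)) (lo hi : Q → L → ℝ)
    (hne : ∀ q, (I q).Nonempty)
    (hsub : ∀ q, I q ⊆ Set.Icc (lo q) (hi q))
    (hcl : ∀ q, closure (I q) = Set.Icc (lo q) (hi q))
    (hcover : (⋃ q, I q) = Set.Icc (0 : L → ℝ) xcap)
    (hdisj : ∀ q q', q ≠ q' → Disjoint (I q) (I q'))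
    (π : (L → ℝ) → Q) (hπ : ∀ x ∈ Set.Icc (0 : L → ℝ) xcap, x ∈ I (π x))
    (nD : ℕ) (dlo dhi : Fin nD → L → ℝ)
    (hdlo : ∀ i l, 0 ≤ dlo i l) (hdbox : ∀ i, dlo i ≤ dhi i)
    (D : Set (L → ℝ)) (hD : D ⊆ ⋃ i : Fin nD, Set.Icc (dlo i) (dhi i)) :
    ∀ x ∈ Set.Icc (0 : L → ℝ) xcap, ∀ d ∈ D,
      (I (π (Fupd η τ c xcap β α s x d)) ∩
        ⋃ i : Fin nD, {x' : L → ℝ | ∀ l,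
          Fupd η τ c xcap β α s
              (fun k => if k ≠ l ∧ τ k = τ l then hi (π x) k else lo (π x) k)
              (dlo i) l ≤ x' l ∧
          x' l ≤ Fupd η τ c xcap β α s
              (fun k => if k ≠ l ∧ τ k = τ l then lo (π x) k else hi (π x) k)
              (dhi i) l}).Nonempty :=
  cm_abstraction_simulates_general η τ hself c xcap (fun l => (hc l).le) β hβ hβsupp s α hα
    (fun k => sum_le_one_of_nonempty_imp_eq_one (hαsum k)) (fun l k h => hA1 l k (hβsupp k l h) h)
    I lo hi hsub π hπ dlo dhi hdlo D hD
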